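/- (Infinitesimal symmetry theorem.) Let Θ, ψ : ℝ⁸ → ℝ be smooth, let λ ∈ ℝ, and set ω_{ik} = Θ_{x^i y^k} − Θ_{x^k y^i}. Suppose ψ satisfies, at every point of ℝ⁸ and for every free index l = 1,…,4, the symmetric linear system Σ_{i,k,m} ε^{iklm} ω_{ik} (ψ_{y^m} − λ ψ_{x^m}) = 0. Then ψ satisfies the infinitesimal symmetry condition of the 4+4-dimensional TED equation: Σ_{i,k,l,m} ε^{iklm} ω_{ik} ψ_{x^l y^m} = 0 at every point. -/

import Mathlib

noncomputable section

/-- Partial derivative of `f : ℝⁿ → ℝ` in the `i`-th coordinate direction. -/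
def pd {n : ℕ} (i : Fin n) (f : (Fin n → ℝ) → ℝ) : (Fin n → ℝ) → ℝ :=
  fun p => fderiv ℝ f p (Pi.single i 1)

/-- `∂/∂x^i` on functions of `(x¹,…,x⁴,y¹,…,y⁴) ∈ ℝ⁸`. -/
def px (i : Fin 4) (f : (Fin 8 → ℝ) → ℝ) : (Fin 8 → ℝ) → ℝ :=
  pd ⟨i.val, by omega⟩ f

/-- `∂/∂y^i` on functions of `(x¹,…,x⁴,y¹,…,y⁴) ∈ ℝ⁸`. -/
def py (i : Fin 4) (f : (Fin 8 → ℝ) → ℝ) : (Fin 8 → ℝ) → ℝ :=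
  pd ⟨i.val + 4, by omega⟩ f

/-- Levi-Civita symbol on indices `1,…,4`. -/
def eps4 (i k l m : Fin 4) : ℝ :=
  Matrix.det (Matrix.of fun r c : Fin 4 => if (![i, k, l, m]) r = c then (1 : ℝ) else 0)

/-- `ω_{ik} = Θ_{x^i y^k} − Θ_{x^k y^i}`. -/
def omg (Θ : (Fin 8 → ℝ) → ℝ) (i k : Fin 4) : (Fin 8 → ℝ) → ℝ :=
  fun p => px i (py k Θ) p - px k (py i Θ) p

theorem eps4_swap (a b : Fin 4) (hab : a ≠ b) (M : Matrix (Fin 4) (Fin 4) ℝ) :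
    (M.submatrix (Equiv.swap a b) id).det = - M.det := by
  rw [Matrix.det_permute, Equiv.Perm.sign_swap hab]
  simp

theorem eps4_il (i k l m : Fin 4) : eps4 l k i m = - eps4 i k l m := by
  unfold eps4
  rw [← eps4_swap 0 2 (by decide)]
  congr 1
  ext r c
  fin_cases r <;> simp [Matrix.submatrix, Equiv.swap_apply_def] <;> congr

theorem eps4_kl (i k l m : Fin 4) : eps4 i l k m = - eps4 i k l m := by
  unfold eps4
  rw [← eps4_swap 1 2 (by decide)]
  congr 1
  ext r c
  fin_cases r <;> simp [Matrix.submatrix, Equiv.swap_apply_def] <;> congr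

theorem eps4_lm (i k l m : Fin 4) : eps4 i k m l = - eps4 i k l m := by
  unfold eps4
  rw [← eps4_swap 2 3 (by decide)]
  congr 1
  ext r c
  fin_cases r <;> simp [Matrix.submatrix, Equiv.swap_apply_def] <;> congr

theorem pd_smooth {n : ℕ} (i : Fin n) {f : (Fin n → ℝ) → ℝ} (hf : ContDiff ℝ (⊤ : ℕ∞) f) :
    ContDiff ℝ (⊤ : ℕ∞) (pd i f) := by
  unfold pd
  exact (hf.fderiv_right (m := (⊤ : ℕ∞)) (by simp)).clm_apply contDiff_const

theorem pd_comm {n : ℕ} (i j : Fin n) {f : (Fin n → ℝ) → ℝ} (hf : ContDiff ℝ (⊤ : ℕ∞) f)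
    (p : Fin n → ℝ) : pd i (pd j f) p = pd j (pd i f) p := by
  have hd : Differentiable ℝ (fderiv ℝ f) :=
    (hf.fderiv_right (m := (⊤ : ℕ∞)) (by simp)).differentiable (by simp)
  have key : ∀ a b : Fin n, pd a (pd b f) p
      = fderiv ℝ (fderiv ℝ f) p (Pi.single a 1) (Pi.single b 1) := by
    intro a b
    unfold pd
    rw [fderiv_clm_apply (hd p) (by fun_prop)]
    simp
  rw [key, key]
  exact (hf.contDiffAt.isSymmSndFDerivAt (by simpa using (WithTop.coe_le_coe.2 (le_top : (2 : ℕ∞) ≤ ⊤)))).eq _ _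

/-- contraction over the first and third index with a symmetric tensor vanishes -/
theorem sum_il (T : Fin 4 → Fin 4 → Fin 4 → ℝ) (g : Fin 4 → ℝ)
    (hT : ∀ l i k, T l i k = T i l k) :
    ∑ l, ∑ i, ∑ k, ∑ m, eps4 i k l m * T l i k * g m = 0 := by
  have h : ∑ l, ∑ i, ∑ k, ∑ m, eps4 i k l m * T l i k * g m
      = - ∑ l, ∑ i, ∑ k, ∑ m, eps4 i k l m * T l i k * g m := by
    conv_lhs => rw [Finset.sum_comm]
    simp only [← Finset.sum_neg_distrib]
    refine Finset.sum_congr rfl fun l _ => Finset.sum_congr rfl fun i _ =>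
      Finset.sum_congr rfl fun k _ => Finset.sum_congr rfl fun m _ => ?_
    rw [eps4_il, hT]
    ring
  linarith

theorem sum_kl (T : Fin 4 → Fin 4 → Fin 4 → ℝ) (g : Fin 4 → ℝ)
    (hT : ∀ l i k, T l i k = T i l k) :
    ∑ l, ∑ i, ∑ k, ∑ m, eps4 i k l m * T l k i * g m = 0 := by
  have h : ∑ l, ∑ i, ∑ k, ∑ m, eps4 i k l m * T l k i * g m
      = - ∑ l, ∑ i, ∑ k, ∑ m, eps4 i k l m * T l i k * g m := by
    simp only [← Finset.sum_neg_distrib]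
    refine Finset.sum_congr rfl fun l _ => ?_
    rw [Finset.sum_comm]
    refine Finset.sum_congr rfl fun i _ =>
      Finset.sum_congr rfl fun k _ => Finset.sum_congr rfl fun m _ => ?_
    have : eps4 k i l m = - eps4 i k l m := by
      rw [eps4_kl k l i m, eps4_il i l k m, eps4_kl i k l m]
      ring
    rw [this]
    ring
  rw [h, sum_il T g hT, neg_zero]

theorem sum_lm (w S : Fin 4 → Fin 4 → ℝ) (hS : ∀ l m, S l m = S m l) :
    ∑ l, ∑ i, ∑ k, ∑ m, eps4 i k l m * w i k * S l m = 0 := by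
  have e : ∑ l, ∑ i, ∑ k, ∑ m, eps4 i k l m * w i k * S l m
      = ∑ i, ∑ k, ∑ l, ∑ m, eps4 i k l m * w i k * S l m := by
    rw [Finset.sum_comm]
    exact Finset.sum_congr rfl fun i _ => Finset.sum_comm
  rw [e]
  refine Finset.sum_eq_zero fun i _ => Finset.sum_eq_zero fun k _ => ?_
  have h : ∑ l, ∑ m, eps4 i k l m * w i k * S l m
      = - ∑ l, ∑ m, eps4 i k l m * w i k * S l m := by
    conv_lhs => rw [Finset.sum_comm]
    simp only [← Finset.sum_neg_distrib]
    refine Finset.sum_congr rfl fun l _ => Finset.sum_congr rfl fun m _ => ?_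
    rw [eps4_lm, hS]
    ring
  linarith

/-- infinitesimal symmetry theorem: if a smooth `ψ` satisfies the symmetric
linear system `Σ_{i,k,m} ε^{iklm} ω_{ik} (ψ_{y^m} − λ ψ_{x^m}) = 0` (for every free index `l`
and every point), then `Σ_{i,k,l,m} ε^{iklm} ω_{ik} ψ_{x^l y^m} = 0` at every point. -/
theorem stmt3 (Θ ψ : (Fin 8 → ℝ) → ℝ) (hΘ : ContDiff ℝ (⊤ : ℕ∞) Θ)
    (hψ : ContDiff ℝ (⊤ : ℕ∞) ψ) (lam : ℝ)
    (hlin : ∀ l : Fin 4, ∀ p : Fin 8 → ℝ,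
      ∑ i, ∑ k, ∑ m, eps4 i k l m * omg Θ i k p * (py m ψ p - lam * px m ψ p) = 0) :
    ∀ p : Fin 8 → ℝ,
      ∑ i, ∑ k, ∑ l, ∑ m, eps4 i k l m * omg Θ i k p * px l (py m ψ) p = 0 := by
  intro p
  have hpyΘ : ∀ k, ContDiff ℝ (⊤ : ℕ∞) (py k Θ) := fun k => pd_smooth _ hΘ
  have hxyΘ : ∀ i k, ContDiff ℝ (⊤ : ℕ∞) (px i (py k Θ)) := fun i k => pd_smooth _ (hpyΘ k)
  have hpy : ∀ k, ContDiff ℝ (⊤ : ℕ∞) (py k ψ) := fun k => pd_smooth _ hψ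
  have hpx : ∀ k, ContDiff ℝ (⊤ : ℕ∞) (px k ψ) := fun k => pd_smooth _ hψ
  have d1 : ∀ i k, DifferentiableAt ℝ (px i (py k Θ)) p :=
    fun i k => (hxyΘ i k).differentiable (by simp) p
  have d2 : ∀ k, DifferentiableAt ℝ (py k ψ) p := fun k => (hpy k).differentiable (by simp) p
  have d3 : ∀ k, DifferentiableAt ℝ (px k ψ) p := fun k => (hpx k).differentiable (by simp) p
  have hder : ∀ l : Fin 4, ∑ i, ∑ k, ∑ m,
      (eps4 i k l m * px l (px i (py k Θ)) p * (py m ψ p - lam * px m ψ p)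
        - eps4 i k l m * px l (px k (py i Θ)) p * (py m ψ p - lam * px m ψ p)
        + eps4 i k l m * omg Θ i k p * px l (py m ψ) p
        - lam * (eps4 i k l m * omg Θ i k p * px l (px m ψ) p)) = 0 := by
    intro l
    have hF : HasFDerivAt (fun q => ∑ i, ∑ k, ∑ m,
        eps4 i k l m * (px i (py k Θ) q - px k (py i Θ) q) * (py m ψ q - lam * px m ψ q)) _ p :=
      HasFDerivAt.fun_sum fun i _ => HasFDerivAt.fun_sum fun k _ => HasFDerivAt.fun_sum fun m _ =>
        (((d1 i k).hasFDerivAt.sub (d1 k i).hasFDerivAt).const_mul (eps4 i k l m)).mul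
          ((d2 m).hasFDerivAt.sub ((d3 m).hasFDerivAt.const_mul lam))
    have h0 : (fun q => ∑ i, ∑ k, ∑ m,
        eps4 i k l m * (px i (py k Θ) q - px k (py i Θ) q) * (py m ψ q - lam * px m ψ q))
        = fun _ => (0 : ℝ) := funext fun q => hlin l q
    rw [h0] at hF
    have hu := hF.unique (hasFDerivAt_const (0 : ℝ) p)
    have hv := congrArg (fun L => L (Pi.single (⟨l.val, by omega⟩ : Fin 8) (1 : ℝ))) hu
    simp only [_root_.sum_apply, _root_.zero_apply] at hv
    rw [← hv]
    refine Finset.sum_congr rfl fun i _ => Finset.sum_congr rfl fun k _ =>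
      Finset.sum_congr rfl fun m _ => ?_
    have e : ∀ f, px l f p = fderiv ℝ f p (Pi.single (⟨l.val, by omega⟩ : Fin 8) (1 : ℝ)) :=
      fun f => rfl
    simp only [e, omg, _root_.add_apply, _root_.sub_apply,
      _root_.smul_apply, smul_eq_mul, Pi.sub_apply]
    simp only [← e]
    ring
  have htot := Finset.sum_eq_zero fun l (_ : l ∈ (Finset.univ : Finset (Fin 4))) => hder l
  simp only [Finset.sum_add_distrib, Finset.sum_sub_distrib, ← Finset.mul_sum] at htot
  have hT : ∀ l i k, px l (px i (py k Θ)) p = px i (px l (py k Θ)) p :=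
    fun l i k => pd_comm _ _ (hpyΘ k) p
  rw [sum_il (fun l i k => px l (px i (py k Θ)) p) (fun m => py m ψ p - lam * px m ψ p) hT,
    sum_kl (fun l i k => px l (px i (py k Θ)) p) (fun m => py m ψ p - lam * px m ψ p) hT,
    sum_lm (fun i k => omg Θ i k p) (fun l m => px l (px m ψ) p)
      (fun l m => pd_comm _ _ hψ p)] at htot
  have e : ∑ l, ∑ i, ∑ k, ∑ m, eps4 i k l m * omg Θ i k p * px l (py m ψ) p
      = ∑ i, ∑ k, ∑ l, ∑ m, eps4 i k l m * omg Θ i k p * px l (py m ψ) p := by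
    rw [Finset.sum_comm]
    exact Finset.sum_congr rfl fun i _ => Finset.sum_comm
  rw [← e]
  linarith
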